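/- Let G be a group with a minimal finite complete rewriting system (A, R, ρ), where in addition A carries an involution ι : A → A with ρ(ι a) = (ρ a)⁻¹ and ρ a ≠ 1 for all a ∈ A. Then the pair (G, A) is stackable, with normal form set C equal to the set of irreducible words of (A, R). -/

import Mathlib

/-
Write `y_g` for the irreducible word of `g`. If `(g, a)` is recursive, the word `y_g a` is
reducible, so `y_g = x u` for a rule `u a → v`, and the path from `g` labeled `u⁻¹ v` ends at `g a`.
Its part labeled `u⁻¹` retraces the normal form `y_g`, hence is degenerate. An edge `(h, b)` of its
part labeled `v = p b q` starts at `h = π(x p)`, and `y_g a → x p b q →* y_h b q`. Thus `(h, b)` is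
smaller than `(g, a)` when edges `(g, a)` are compared through the words `y_g a`, ordered by being a
subword of a proper reduct. That order is well-founded because a rewriting of a subword extends
to the whole word.
-/

namespace Stk

variable {G : Type*} [Group G] {A : Type*}

/-- Evaluation of a word over the generating alphabet in the group. -/
def eval (ρ : A → G) (w : List A) : G := (w.map ρ).prod

/-- `C` is a set of normal forms: evaluation restricted to `C` is a bijection onto `G`. -/
def IsNormalFormSet (ρ : A → G) (C : Set (List A)) : Prop :=
  ∀ g : G, ∃! w : List A, w ∈ C ∧ eval ρ w = g

/-- The directed edge `(g, a)` of the Cayley graph is degenerate with respect to `C`. -/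
def IsDegenerate (ρ : A → G) (ι : A → A) (C : Set (List A)) (e : G × A) : Prop :=
  ∃ y₁ y₂ : List A, y₁ ∈ C ∧ eval ρ y₁ = e.1 ∧ y₂ ∈ C ∧ eval ρ y₂ = e.1 * ρ e.2 ∧
    (y₁ ++ [e.2] = y₂ ∨ y₁ = y₂ ++ [ι e.2])

/-- A non-degenerate edge is recursive. -/
def IsRecursive (ρ : A → G) (ι : A → A) (C : Set (List A)) (e : G × A) : Prop :=
  ¬ IsDegenerate ρ ι C e

/-- `e` is one of the edges along the path starting at `g` labeled by the word `w`. -/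
def EdgeOnPath (ρ : A → G) (g : G) (w : List A) (e : G × A) : Prop :=
  ∃ i : Fin w.length, e = (g * eval ρ (w.take i), w.get i)

/-- A stackable structure for `(G, A)`: a normal form set `C` containing the empty word,
a well-founded strict partial order `lt` on the recursive edges, and a constant `k`,
such that each edge `(g, a)` admits a word of length at most `k` evaluating to `ρ a`,
each of whose edges along the path from `g` is degenerate or recursive and `lt`-below
`(g, a)`. -/
def IsStackableStructure (ρ : A → G) (ι : A → A) (C : Set (List A))
    (lt : G × A → G × A → Prop) (k : ℕ) : Prop :=
  ([] : List A) ∈ C ∧ IsNormalFormSet ρ C ∧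
  (∀ e e' : G × A, lt e e' → IsRecursive ρ ι C e ∧ IsRecursive ρ ι C e') ∧
  Transitive lt ∧ WellFounded lt ∧
  ∀ g : G, ∀ a : A, ∃ w : List A, w.length ≤ k ∧ eval ρ w = ρ a ∧
    ∀ e' : G × A, EdgeOnPath ρ g w e' → IsDegenerate ρ ι C e' ∨ lt e' (g, a)

/-- The pair `(G, A)` is stackable. -/
def IsStackable (ρ : A → G) (ι : A → A) : Prop :=
  ∃ (C : Set (List A)) (lt : G × A → G × A → Prop) (k : ℕ),
    IsStackableStructure ρ ι C lt k

/-- A stacking map for a stackable structure. -/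
def IsStackingMap (ρ : A → G) (ι : A → A) (C : Set (List A))
    (lt : G × A → G × A → Prop) (k : ℕ) (Φ : G × A → List A) : Prop :=
  ∀ e : G × A, IsRecursive ρ ι C e →
    eval ρ (Φ e) = ρ e.2 ∧ (Φ e).length ≤ k ∧
    ∀ e' : G × A, EdgeOnPath ρ e.1 (Φ e) e' → IsDegenerate ρ ι C e' ∨ lt e' e

/-- A stacking map extended by `Φ (g, a) = [a]` on degenerate edges. -/
def IsExtendedStackingMap (ρ : A → G) (ι : A → A) (C : Set (List A))
    (lt : G × A → G × A → Prop) (k : ℕ) (Φ : G × A → List A) : Prop :=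
  (∀ e : G × A, IsDegenerate ρ ι C e → Φ e = [e.2]) ∧ IsStackingMap ρ ι C lt k Φ

/-- A word is freely reduced if no letter is followed by its formal inverse. -/
def FreelyReduced (ι : A → A) (w : List A) : Prop :=
  List.Chain' (fun a b => b ≠ ι a) w


/-- One rewriting step: replace a contiguous occurrence of a left-hand side of a rule by
the corresponding right-hand side. -/
def Rewrites (R : Set (List A × List A)) (w w' : List A) : Prop :=
  ∃ r ∈ R, ∃ x y : List A, w = x ++ r.1 ++ y ∧ w' = x ++ r.2 ++ y

/-- A word is irreducible if it contains no left-hand side of a rule as a contiguous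
subword. -/
def RWIrreducible (R : Set (List A × List A)) (w : List A) : Prop :=
  ∀ r ∈ R, ¬ r.1 <:+: w

/-- `(A, R, ρ)` is a finite complete rewriting system for `G`: the rules form a finite
set of relations of `G`, each group element is represented by exactly one irreducible
word, and there is no infinite sequence of rewritings. -/
def IsCompleteRewritingSystem (ρ : A → G) (R : Set (List A × List A)) : Prop :=
  R.Finite ∧ (∀ r ∈ R, eval ρ r.1 = eval ρ r.2) ∧
  (∀ g : G, ∃! w : List A, RWIrreducible R w ∧ eval ρ w = g) ∧
  WellFounded (fun w' w : List A => Rewrites R w w')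

/-- A minimal finite complete rewriting system: right-hand sides and all proper subwords
of left-hand sides are irreducible. -/
def IsMinimalCRS (ρ : A → G) (R : Set (List A × List A)) : Prop :=
  IsCompleteRewritingSystem ρ R ∧
  ∀ r ∈ R, RWIrreducible R r.2 ∧
    ∀ u : List A, u <:+: r.1 → u ≠ r.1 → RWIrreducible R u

section Words

variable (ρ : A → G) (ι : A → A)

@[simp]
theorem eval_nil : eval ρ [] = 1 := rfl

@[simp]
theorem eval_cons (a : A) (w : List A) : eval ρ (a :: w) = ρ a * eval ρ w := by
  simp [eval]

@[simp]
theorem eval_append (u v : List A) : eval ρ (u ++ v) = eval ρ u * eval ρ v := by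
  simp [eval]

/-- The formal inverse `ι aₙ ⋯ ι a₁` of the word `a₁ ⋯ aₙ`. -/
def invWord (w : List A) : List A := (w.map ι).reverse

@[simp]
theorem length_invWord (w : List A) : (invWord ι w).length = w.length := by
  simp [invWord]

theorem invWord_concat (w : List A) (a : A) : invWord ι (w ++ [a]) = ι a :: invWord ι w := by
  simp [invWord]

variable {ρ ι}

theorem eval_invWord (hρι : ∀ a, ρ (ι a) = (ρ a)⁻¹) (w : List A) :
    eval ρ (invWord ι w) = (eval ρ w)⁻¹ := by
  simp [eval, invWord, List.prod_inv_reverse, hρι, Function.comp_def]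

end Words

section Paths

variable {ρ : A → G} {g : G} {e : G × A}

@[simp]
theorem edgeOnPath_nil : ¬ EdgeOnPath ρ g [] e :=
  fun ⟨i, _⟩ => i.elim0

theorem edgeOnPath_cons {a : A} {w : List A} :
    EdgeOnPath ρ g (a :: w) e ↔ e = (g, a) ∨ EdgeOnPath ρ (g * ρ a) w e := by
  simp [EdgeOnPath, Fin.exists_fin_succ, mul_assoc]

theorem edgeOnPath_append {u v : List A} :
    EdgeOnPath ρ g (u ++ v) e ↔ EdgeOnPath ρ g u e ∨ EdgeOnPath ρ (g * eval ρ u) v e := by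
  induction u generalizing g with
  | nil => simp
  | cons a u ih => simp [edgeOnPath_cons, ih, or_assoc, mul_assoc]

theorem EdgeOnPath.exists_eq_append_cons {w : List A} (h : EdgeOnPath ρ g w e) :
    ∃ p q, w = p ++ e.2 :: q ∧ e.1 = g * eval ρ p := by
  obtain ⟨i, rfl⟩ := h
  exact ⟨w.take i, w.drop (i + 1), by simp, rfl⟩

end Paths

section DegenerateEdges

variable {ρ : A → G} {ι : A → A} {C : Set (List A)}

theorem isDegenerate_of_concat_mem {w : List A} {a : A} (hw : w ∈ C) (hwa : w ++ [a] ∈ C) :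
    IsDegenerate ρ ι C (eval ρ w, a) :=
  ⟨w, w ++ [a], hw, rfl, hwa, by simp, .inl rfl⟩

theorem isDegenerate_inv_of_concat_mem (hinv : Function.Involutive ι)
    (hρι : ∀ a, ρ (ι a) = (ρ a)⁻¹) {w : List A} {a : A} (hw : w ∈ C) (hwa : w ++ [a] ∈ C) :
    IsDegenerate ρ ι C (eval ρ (w ++ [a]), ι a) :=
  ⟨w ++ [a], w, hwa, rfl, hw, by simp [hρι], .inr (by rw [hinv a])⟩

theorem isDegenerate_of_edgeOnPath_invWord (hinv : Function.Involutive ι)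
    (hρι : ∀ a, ρ (ι a) = (ρ a)⁻¹) (hprefix : ∀ w a, w ++ [a] ∈ C → w ∈ C)
    {x u : List A} {e : G × A} (hxu : x ++ u ∈ C)
    (he : EdgeOnPath ρ (eval ρ (x ++ u)) (invWord ι u) e) : IsDegenerate ρ ι C e := by
  induction u using List.reverseRecOn with
  | nil => exact absurd he edgeOnPath_nil
  | append_singleton u a ih =>
    rw [← List.append_assoc] at hxu he
    have hxu' : x ++ u ∈ C := hprefix _ _ hxu
    rw [invWord_concat, edgeOnPath_cons] at he
    obtain rfl | he := he
    · exact isDegenerate_inv_of_concat_mem hinv hρι hxu' hxu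
    · have hback : eval ρ (x ++ u ++ [a]) * ρ (ι a) = eval ρ (x ++ u) := by
        simp [hρι, mul_assoc]
      exact ih hxu' (hback ▸ he)

end DegenerateEdges

section NormalForm

variable {ρ : A → G} {C : Set (List A)}

/-- The unique word of the normal form set `C` representing `g`, written `y_g` in the paper. -/
noncomputable def IsNormalFormSet.normalForm (hC : IsNormalFormSet ρ C) (g : G) : List A :=
  (hC g).choose

theorem IsNormalFormSet.normalForm_mem (hC : IsNormalFormSet ρ C) (g : G) :
    hC.normalForm g ∈ C :=
  (hC g).choose_spec.1.1

theorem IsNormalFormSet.eval_normalForm (hC : IsNormalFormSet ρ C) (g : G) :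
    eval ρ (hC.normalForm g) = g :=
  (hC g).choose_spec.1.2

theorem IsNormalFormSet.normalForm_eval (hC : IsNormalFormSet ρ C) {w : List A} (hw : w ∈ C) :
    hC.normalForm (eval ρ w) = w :=
  ((hC _).choose_spec.2 w ⟨hw, rfl⟩).symm

end NormalForm

section Rewriting

open Relation

variable {R : Set (List A × List A)}

theorem RWIrreducible.of_infix {u w : List A} (hw : RWIrreducible R w) (h : u <:+: w) :
    RWIrreducible R u :=
  fun r hr hru => hw r hr (hru.trans h)

theorem RWIrreducible.exists_rule_of_concat {w : List A} {a : A} (hw : RWIrreducible R w)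
    (hwa : ¬ RWIrreducible R (w ++ [a])) : ∃ r ∈ R, ∃ x u, w = x ++ u ∧ r.1 = u ++ [a] := by
  simp only [RWIrreducible, not_forall, not_not] at hwa
  obtain ⟨r, hr, hinfix⟩ := hwa
  obtain hsuffix | hinfix := List.infix_concat_iff.1 hinfix
  · obtain hnil | ⟨u, hu, x, hx⟩ := List.suffix_concat_iff.1 hsuffix
    · exact absurd (hnil ▸ List.nil_infix) (hw r hr)
    · exact ⟨r, hr, x, u, hx.symm, hu⟩
  · exact absurd hinfix (hw r hr)

theorem rewrites_of_mem {r : List A × List A} (hr : r ∈ R) (x y : List A) :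
    Rewrites R (x ++ r.1 ++ y) (x ++ r.2 ++ y) :=
  ⟨r, hr, x, y, rfl, rfl⟩

theorem Rewrites.append_append {w w' : List A} (h : Rewrites R w w') (x y : List A) :
    Rewrites R (x ++ w ++ y) (x ++ w' ++ y) := by
  obtain ⟨r, hr, s, t, rfl, rfl⟩ := h
  exact ⟨r, hr, x ++ s, t ++ y, by simp, by simp⟩

theorem transGen_rewrites_append_append {w w' : List A} (h : TransGen (Rewrites R) w w')
    (x y : List A) : TransGen (Rewrites R) (x ++ w ++ y) (x ++ w' ++ y) :=
  TransGen.lift (x ++ · ++ y) (fun _ _ hstep => hstep.append_append x y) _ _ h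

theorem reflTransGen_rewrites_append_right {w w' : List A}
    (h : ReflTransGen (Rewrites R) w w') (y : List A) :
    ReflTransGen (Rewrites R) (w ++ y) (w' ++ y) :=
  ReflTransGen.lift (· ++ y) (fun _ _ hstep => hstep.append_append [] y) _ _ h

theorem exists_irreducible_reflTransGen (hwf : WellFounded fun w' w => Rewrites R w w')
    (w : List A) : ∃ n, RWIrreducible R n ∧ ReflTransGen (Rewrites R) w n := by
  obtain ⟨n, hwn, hmin⟩ := hwf.has_min {n | ReflTransGen (Rewrites R) w n} ⟨w, .refl⟩
  refine ⟨n, fun r hr ⟨x, y, hxy⟩ => ?_, hwn⟩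
  have hstep : Rewrites R n (x ++ r.2 ++ y) := hxy ▸ rewrites_of_mem hr x y
  exact hmin _ (hwn.tail hstep) hstep

variable {ρ : A → G}

theorem Rewrites.eval_eq (hsound : ∀ r ∈ R, eval ρ r.1 = eval ρ r.2) {w w' : List A}
    (h : Rewrites R w w') : eval ρ w = eval ρ w' := by
  obtain ⟨r, hr, x, y, rfl, rfl⟩ := h
  simp [hsound r hr]

theorem eval_eq_of_reflTransGen_rewrites (hsound : ∀ r ∈ R, eval ρ r.1 = eval ρ r.2)
    {w w' : List A} (h : ReflTransGen (Rewrites R) w w') : eval ρ w = eval ρ w' := by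
  induction h with
  | refl => rfl
  | tail _ hstep ih => exact ih.trans (hstep.eval_eq hsound)

theorem reflTransGen_rewrites_normalForm (hsound : ∀ r ∈ R, eval ρ r.1 = eval ρ r.2)
    (hC : IsNormalFormSet ρ {w | RWIrreducible R w})
    (hwf : WellFounded fun w' w => Rewrites R w w') (w : List A) :
    ReflTransGen (Rewrites R) w (hC.normalForm (eval ρ w)) := by
  obtain ⟨n, hn, hwn⟩ := exists_irreducible_reflTransGen hwf w
  rwa [eval_eq_of_reflTransGen_rewrites hsound hwn, hC.normalForm_eval hn]

end Rewriting

section ReductOrder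

open Relation

variable {R : Set (List A × List A)}

/-- The order on words underlying the order on edges: `u` is a contiguous subword of some word
obtained from `w` by at least one rewriting. -/
def IsReductSubword (R : Set (List A × List A)) (u w : List A) : Prop :=
  ∃ w', TransGen (Rewrites R) w w' ∧ u <:+: w'

theorem IsReductSubword.of_infix {u v w : List A} (h : IsReductSubword R u v) (hvw : v <:+: w) :
    IsReductSubword R u w := by
  obtain ⟨v', hv, hu⟩ := h
  obtain ⟨x, y, rfl⟩ := hvw
  exact ⟨x ++ v' ++ y, transGen_rewrites_append_append hv x y, hu.trans ⟨x, y, rfl⟩⟩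

theorem IsReductSubword.trans {u v w : List A} (huv : IsReductSubword R u v)
    (hvw : IsReductSubword R v w) : IsReductSubword R u w := by
  obtain ⟨w', hw, hv⟩ := hvw
  obtain ⟨w'', hw', hu⟩ := huv.of_infix hv
  exact ⟨w'', hw.trans hw', hu⟩

theorem wellFounded_isReductSubword (hwf : WellFounded fun w' w => Rewrites R w w') :
    WellFounded (IsReductSubword R) := by
  have hacc : ∀ w u, u <:+: w → Acc (IsReductSubword R) u := by
    intro w
    induction w using hwf.transGen.induction with
    | _ w ih =>
      refine fun u hu => ⟨u, fun v hv => ?_⟩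
      obtain ⟨w', hw, hvw'⟩ := hv.of_infix hu
      exact ih w' (transGen_swap.2 hw) v hvw'
  exact ⟨fun w => hacc w w List.infix_rfl⟩

theorem isReductSubword_of_edgeOnPath {ρ : A → G} (hsound : ∀ r ∈ R, eval ρ r.1 = eval ρ r.2)
    (hC : IsNormalFormSet ρ {w | RWIrreducible R w})
    (hwf : WellFounded fun w' w => Rewrites R w w') {r : List A × List A} (hr : r ∈ R)
    {x : List A} {e : G × A} (he : EdgeOnPath ρ (eval ρ x) r.2 e) :
    IsReductSubword R (hC.normalForm e.1 ++ [e.2]) (x ++ r.1) := by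
  obtain ⟨p, q, hpq, hstart⟩ := he.exists_eq_append_cons
  have hrule : Rewrites R (x ++ r.1) (x ++ p ++ e.2 :: q) := by
    simpa [hpq] using rewrites_of_mem hr x []
  have hnormal : ReflTransGen (Rewrites R) (x ++ p ++ e.2 :: q)
      (hC.normalForm e.1 ++ e.2 :: q) := by
    rw [hstart, ← eval_append]
    exact reflTransGen_rewrites_append_right
      (reflTransGen_rewrites_normalForm hsound hC hwf (x ++ p)) _
  exact ⟨_, .head' hrule hnormal, [], q, by simp⟩

end ReductOrder

section Stacking

variable {ρ : A → G} {ι : A → A} {R : Set (List A × List A)}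

/-- The order on recursive edges: `(g, a)` is compared with other edges through the word `y_g a`,
by means of `IsReductSubword`. -/
def EdgeLT (ι : A → A) (hC : IsNormalFormSet ρ {w | RWIrreducible R w}) (e' e : G × A) : Prop :=
  IsRecursive ρ ι {w | RWIrreducible R w} e' ∧ IsRecursive ρ ι {w | RWIrreducible R w} e ∧
    IsReductSubword R (hC.normalForm e'.1 ++ [e'.2]) (hC.normalForm e.1 ++ [e.2])

theorem EdgeLT.trans {hC : IsNormalFormSet ρ {w | RWIrreducible R w}} {e₁ e₂ e₃ : G × A}
    (h : EdgeLT ι hC e₁ e₂) (h' : EdgeLT ι hC e₂ e₃) : EdgeLT ι hC e₁ e₃ :=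
  ⟨h.1, h'.2.1, h.2.2.trans h'.2.2⟩

theorem wellFounded_edgeLT (hC : IsNormalFormSet ρ {w | RWIrreducible R w})
    (hwf : WellFounded fun w' w => Rewrites R w w') : WellFounded (EdgeLT ι hC) :=
  Subrelation.wf (fun h => h.2.2)
    (InvImage.wf (fun e : G × A => hC.normalForm e.1 ++ [e.2]) (wellFounded_isReductSubword hwf))

theorem exists_rule_of_isRecursive (hC : IsNormalFormSet ρ {w | RWIrreducible R w}) {g : G} {a : A}
    (hrec : IsRecursive ρ ι {w | RWIrreducible R w} (g, a)) :
    ∃ r ∈ R, ∃ x u, hC.normalForm g = x ++ u ∧ r.1 = u ++ [a] := by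
  refine RWIrreducible.exists_rule_of_concat (hC.normalForm_mem g) fun hirr => hrec ?_
  simpa only [hC.eval_normalForm] using
    isDegenerate_of_concat_mem (ρ := ρ) (ι := ι) (hC.normalForm_mem g) hirr

theorem isDegenerate_or_edgeLT_of_edgeOnPath (hinv : Function.Involutive ι)
    (hρι : ∀ a, ρ (ι a) = (ρ a)⁻¹) (hsound : ∀ r ∈ R, eval ρ r.1 = eval ρ r.2)
    (hC : IsNormalFormSet ρ {w | RWIrreducible R w})
    (hwf : WellFounded fun w' w => Rewrites R w w') {g : G} {a : A}
    (hrec : IsRecursive ρ ι {w | RWIrreducible R w} (g, a)) {r : List A × List A} (hr : r ∈ R)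
    {x u : List A} (hxu : hC.normalForm g = x ++ u) (hu : r.1 = u ++ [a]) {e : G × A}
    (he : EdgeOnPath ρ g (invWord ι u ++ r.2) e) :
    IsDegenerate ρ ι {w | RWIrreducible R w} e ∨ EdgeLT ι hC e (g, a) := by
  have hg : eval ρ (x ++ u) = g := by rw [← hxu, hC.eval_normalForm]
  obtain he | he := edgeOnPath_append.1 he
  · have hprefix (w : List A) (b : A) (hwb : RWIrreducible R (w ++ [b])) : RWIrreducible R w :=
      hwb.of_infix (List.prefix_append w [b]).isInfix
    exact .inl (isDegenerate_of_edgeOnPath_invWord hinv hρι hprefix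
      (hxu ▸ hC.normalForm_mem g) (hg.symm ▸ he))
  · refine or_iff_not_imp_left.2 fun hrec' => ⟨hrec', hrec, ?_⟩
    have hback : g * eval ρ (invWord ι u) = eval ρ x := by simp [← hg, eval_invWord hρι]
    have hword : hC.normalForm g ++ [a] = x ++ r.1 := by simp [hxu, hu]
    rw [hback] at he
    rw [hword]
    exact isReductSubword_of_edgeOnPath hsound hC hwf hr he

theorem exists_stacking_word (hinv : Function.Involutive ι)
    (hρι : ∀ a, ρ (ι a) = (ρ a)⁻¹) (hsound : ∀ r ∈ R, eval ρ r.1 = eval ρ r.2)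
    (hC : IsNormalFormSet ρ {w | RWIrreducible R w})
    (hwf : WellFounded fun w' w => Rewrites R w w') {k : ℕ}
    (hk : ∀ r ∈ R, r.1.length + r.2.length ≤ k) (g : G) (a : A) :
    ∃ w : List A, w.length ≤ k + 1 ∧ eval ρ w = ρ a ∧ ∀ e, EdgeOnPath ρ g w e →
      IsDegenerate ρ ι {w | RWIrreducible R w} e ∨ EdgeLT ι hC e (g, a) := by
  by_cases hdeg : IsDegenerate ρ ι {w | RWIrreducible R w} (g, a)
  · refine ⟨[a], by simp, by simp, fun e he => .inl ?_⟩
    obtain rfl : e = (g, a) := by simpa [edgeOnPath_cons] using he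
    exact hdeg
  · obtain ⟨r, hr, x, u, hxu, hu⟩ := exists_rule_of_isRecursive hC hdeg
    refine ⟨invWord ι u ++ r.2, ?_, ?_, fun e =>
      isDegenerate_or_edgeLT_of_edgeOnPath hinv hρι hsound hC hwf hdeg hr hxu hu⟩
    · have hlength := hk r hr
      simp only [hu, List.length_append, length_invWord] at hlength ⊢
      lia
    · simp [eval_invWord hρι, ← hsound r hr, hu]

theorem stackable_of_minimal_completeRewritingSystem_general (hinv : Function.Involutive ι)
    (hρι : ∀ a, ρ (ι a) = (ρ a)⁻¹) (hsound : ∀ r ∈ R, eval ρ r.1 = eval ρ r.2)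
    (hC : IsNormalFormSet ρ {w | RWIrreducible R w})
    (hwf : WellFounded fun w' w => Rewrites R w w')
    (hbdd : BddAbove ((fun r => r.1.length + r.2.length) '' R)) :
    ∃ (lt : G × A → G × A → Prop) (k : ℕ),
      IsStackableStructure ρ ι {w : List A | RWIrreducible R w} lt k := by
  obtain ⟨k, hk⟩ := hbdd
  have hnil : RWIrreducible R [] :=
    RWIrreducible.of_infix (hC.normalForm_mem 1) List.nil_infix
  exact ⟨EdgeLT ι hC, k + 1, hnil, hC, fun _ _ h => ⟨h.1, h.2.1⟩, fun _ _ _ => EdgeLT.trans,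
    wellFounded_edgeLT hC hwf,
    exists_stacking_word hinv hρι hsound hC hwf fun _ hr => hk ⟨_, hr, rfl⟩⟩

end Stacking

/-- a group with a minimal finite complete rewriting system (on a symmetric
alphabet) is stackable, with normal form set the irreducible words. -/
theorem stackable_of_minimal_completeRewritingSystem {G : Type*} [Group G] {A : Type*}
    [Fintype A]
    (ρ : A → G) (ι : A → A)
    (hgen : Subgroup.closure (Set.range ρ) = ⊤)
    (hne : ∀ a : A, ρ a ≠ 1)
    (hinv : Function.Involutive ι)
    (hρι : ∀ a : A, ρ (ι a) = (ρ a)⁻¹)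
    (R : Set (List A × List A)) (hR : IsMinimalCRS ρ R) :
    ∃ (lt : G × A → G × A → Prop) (k : ℕ),
      IsStackableStructure ρ ι {w : List A | RWIrreducible R w} lt k := by
  obtain ⟨⟨hfin, hsound, hC, hwf⟩, -⟩ := hR
  exact stackable_of_minimal_completeRewritingSystem_general hinv hρι hsound hC hwf
    (hfin.image _).bddAbove

end Stk
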